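/- With the notation and hypotheses of the context, the degree-3 component of chPar equals, writing a_j := α_{i_j}(λ_j): c_3 − ½ Σ_{i} Σ_{λ} α_i(λ)·r_{i,λ}·D_i·D^2 + ½ Σ_{i} Σ_{λ} (α_i(λ)^2 + 2α_i(λ))·γ_{i,λ}·D_i − (1/6) Σ_{i} Σ_{λ} (α_i(λ)^3 + 3α_i(λ)^2 + 3α_i(λ))·r_{i,λ}·D_i^3 − Σ_{i} Σ_{λ} α_i(λ)·γ_{i,λ}·D + ½ Σ_{i} Σ_{λ} (α_i(λ)^2 + 2α_i(λ))·r_{i,λ}·D_i^2·D − Σ_{i} Σ_{λ} α_i(λ)·δ_{i,λ} − ½ Σ_{i_1<i_2} Σ_{λ_1,λ_2} Σ_{p ∈ P(i_1,i_2)} (a_2^2 a_1 + 2a_1 a_2 + a_1 + a_2^2 + 2a_2)·r_{(i_1,i_2),(λ_1,λ_2),p}·D_{i_2}·[D_p] − ½ Σ_{i_1<i_2} Σ_{λ_1,λ_2} Σ_{p ∈ P(i_1,i_2)} (a_1^2 a_2 + 2a_1 a_2 + a_2 + a_1^2 + 2a_1)·r_{(i_1,i_2),(λ_1,λ_2),p}·D_{i_1}·[D_p]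 + Σ_{i_1<i_2} Σ_{λ_1,λ_2} Σ_{p ∈ P(i_1,i_2)} (a_1 a_2 + a_1 + a_2)·r_{(i_1,i_2),(λ_1,λ_2),p}·D·[D_p] + Σ_{i_1<i_2} Σ_{λ_1,λ_2} (a_1 a_2 + a_1 + a_2)·γ_{(i_1,i_2),(λ_1,λ_2)} − Σ_{i_1<i_2<i_3} Σ_{λ_1,λ_2,λ_3} Σ_{p ∈ P(i_1,i_2,i_3)} (a_1 a_2 a_3 + a_1 a_2 + a_2 a_3 + a_1 a_3 + a_1 + a_2 + a_3)·r_{(i_1,i_2,i_3),(λ_1,λ_2,λ_3),p}·[D_p]. (This is the paper's new explicit formula for the third parabolic Chern character ch_3^{Par}(E), in which −Σ α·δ_{i,λ} encodes the two terms −½ Σ α·ξ_*((c_1)^2(Gr)) + Σ α·ξ_*(c_2(Gr)).) -/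

import Mathlib

open scoped Classical

noncomputable section

variable {A : Type*} [CommRing A] [Algebra ℝ A]

/-- `exp x = Σ_{k ≥ 0} x^k/k!` for a nilpotent element `x`, as a finite sum (the terms with
`k ≥ nilpotencyClass x` vanish). -/
def nexp (x : A) : A :=
  ∑ m ∈ Finset.range (nilpotencyClass x), ((m.factorial : ℝ))⁻¹ • x ^ m

/-- `J(a,b,x) = Σ_{k ≥ 0} (-1)^k ((b^{k+1} - a^{k+1})/(k+1)!) x^k`, the formal value of
`∫_a^b exp (-ρ x) dρ` for a nilpotent element `x` (a finite sum). -/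
def Jf (a b : ℝ) (x : A) : A :=
  ∑ m ∈ Finset.range (nilpotencyClass x),
    ((-1 : ℝ) ^ m * ((b ^ (m + 1) - a ^ (m + 1)) / (m + 1).factorial)) • x ^ m

variable {n : ℕ} {Sig : Fin n → Type*} [∀ i, Fintype (Sig i)] [∀ i, LinearOrder (Sig i)]

/-- `c_σ = c + Σ_{q=1}^n (-1)^q Σ_{I = {i_1<⋯<i_q}} Σ_{λ : σ_{i_j} < λ_{i_j} ∀ j} g_{I,λ}`,
the Chern character of the component sheaf `E_σ` of a locally abelian parabolic bundle,
computed via the Koszul-style resolution.  Here `λ` runs over multi-indices of covers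
(risers) `λ_i` of `Σ_i` for `i ∈ I` with `σ_i ≤ m_-(λ_i)`. -/
def cSigma (c : A) (g : ∀ I : Finset (Fin n), ((i : I) → Sig i.1 × Sig i.1) → A)
    (σ : ∀ i, Sig i) : A :=
  c + ∑ I ∈ Finset.univ.filter (fun I : Finset (Fin n) => I.Nonempty),
        (-1 : A) ^ I.card *
          ∑ lam ∈ Finset.univ.filter
              (fun lam : (i : I) → Sig i.1 × Sig i.1 =>
                ∀ i : I, (lam i).1 ⋖ (lam i).2 ∧ σ i.1 ≤ (lam i).1),
            g I lam

/-- The parabolic Chern character, given by the Iyer–Simpson integral formula evaluated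
formally: `chPar = (∏_i J(0,1,D_i))⁻¹ Σ_{σ} c_σ ∏_i J(α_-(σ_i), α_+(σ_i), D_i)`. -/
def chPar (D : Fin n → A) (αm αp : ∀ i, Sig i → ℝ) (c : A)
    (g : ∀ I : Finset (Fin n), ((i : I) → Sig i.1 × Sig i.1) → A) : A :=
  Ring.inverse (∏ i, Jf 0 1 (D i)) *
    ∑ σ : ∀ i, Sig i, cSigma c g σ * ∏ i, Jf (αm i (σ i)) (αp i (σ i)) (D i)

/-- The multi-index of covers on the singleton `{i}` determined by one cover `p` of `Σ_i`. -/
def lamOfSingle {n : ℕ} {Sig : Fin n → Type*} (i : Fin n) (p : Sig i × Sig i) :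
    (j : ({i} : Finset (Fin n))) → Sig j.1 × Sig j.1 :=
  fun j => (Finset.mem_singleton.mp j.2).symm ▸ p

/-- The multi-index of covers on the pair `{i₁, i₂}` determined by covers `p₁` of `Σ_{i₁}`
and `p₂` of `Σ_{i₂}`. -/
def lamOfPair {n : ℕ} {Sig : Fin n → Type*} (i₁ i₂ : Fin n)
    (p₁ : Sig i₁ × Sig i₁) (p₂ : Sig i₂ × Sig i₂) :
    (j : ({i₁, i₂} : Finset (Fin n))) → Sig j.1 × Sig j.1 :=
  fun j =>
    if h : j.1 = i₁ then h.symm ▸ p₁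
    else
      (by
        have hj := j.2
        simp only [Finset.mem_insert, Finset.mem_singleton] at hj
        exact ((hj.resolve_left h).symm ▸ p₂ : Sig j.1 × Sig j.1))

/-- The multi-index of covers on the triple `{i₁, i₂, i₃}` determined by covers `p₁, p₂, p₃`
of `Σ_{i₁}, Σ_{i₂}, Σ_{i₃}`. -/
def lamOfTriple {n : ℕ} {Sig : Fin n → Type*} (i₁ i₂ i₃ : Fin n)
    (p₁ : Sig i₁ × Sig i₁) (p₂ : Sig i₂ × Sig i₂) (p₃ : Sig i₃ × Sig i₃) :
    (j : ({i₁, i₂, i₃} : Finset (Fin n))) → Sig j.1 × Sig j.1 :=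
  fun j =>
    if h1 : j.1 = i₁ then h1.symm ▸ p₁
    else if h2 : j.1 = i₂ then h2.symm ▸ p₂
    else
      (by
        have hj := j.2
        simp only [Finset.mem_insert, Finset.mem_singleton] at hj
        exact (((hj.resolve_left h1).resolve_left h2).symm ▸ p₃ : Sig j.1 × Sig j.1))

/-!
Let `I` be a set of indices and `λ` a family of covers on `I`. Since
`J(-1, a, x) = exp x * J(0, 1 + a, x)`, the sum of `∏ i, J(α_-(σ_i), α_+(σ_i), D_i)` over all `σ`
below `λ` telescopes along each chain to
`exp D * (∏ i ∈ I, J(0, 1 + α_i(λ_i), D_i)) * ∏ i ∉ I, J(0, 1, D_i)`. The factor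
`∏ i ∈ I, J(0, 1, D_i)` of `g_{I,λ}` completes the last product to `∏ i, J(0, 1, D_i)`, which the
normalization of `chPar` cancels, and the twist relation subtracts the same expression with all
`1 + α_i(λ_i)` replaced by `1`. Hence `chPar - c` is the sum over `I ≠ ∅` and `λ` of
`(-1)^|I| * h_{I,λ} * exp D * (∏ i ∈ I, J(0, 1 + α_i(λ_i), D_i) - ∏ i ∈ I, J(0, 1, D_i))`.
As `h_{I,λ}` starts in degree `|I|`, only the `I` with `|I| ≤ 3` contribute in degree `3`.
-/

section NilpotentEval

open PowerSeries

variable {R B : Type*} [CommRing R] [CommRing B] [Algebra R B] {x : B}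

theorem aeval_trunc_nilpotencyClass (hx : IsNilpotent x) (p : Polynomial R) :
    Polynomial.aeval x (trunc (nilpotencyClass x) (p : R⟦X⟧)) = Polynomial.aeval x p := by
  set N := nilpotencyClass x
  have hpow : ∀ k ∉ Finset.range N, x ^ k = 0 := fun k hk =>
    pow_eq_zero_of_le (by simpa using hk) (pow_nilpotencyClass hx)
  rw [Polynomial.aeval_def, eval₂_trunc_eq_sum_range,
    Polynomial.aeval_eq_sum_range' (n := max N (p.natDegree + 1)) (by lia)]
  simp only [Polynomial.coeff_coe, ← Algebra.smul_def]
  refine Finset.sum_subset (Finset.range_mono (le_max_left _ _)) fun k _ hk => ?_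
  rw [hpow k hk, smul_zero]

/-- Evaluation of a formal power series at a nilpotent element `x`. It is computed on the truncation
at the nilpotency class of `x`, so that it unfolds to the finite sums defining `nexp` and `Jf`. -/
def nilpotentEval (hx : IsNilpotent x) : R⟦X⟧ →ₐ[R] B :=
  AlgHom.ofLinearMap ((Polynomial.aeval x).toLinearMap ∘ₗ trunc (nilpotencyClass x))
    (by simpa using aeval_trunc_nilpotencyClass hx (1 : Polynomial R))
    (fun f g => by
      simp only [LinearMap.comp_apply, AlgHom.toLinearMap_apply]
      rw [← trunc_trunc_mul_trunc, ← Polynomial.coe_mul, aeval_trunc_nilpotencyClass hx, map_mul])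

theorem nilpotentEval_apply (hx : IsNilpotent x) (f : R⟦X⟧) :
    nilpotentEval hx f = ∑ m ∈ Finset.range (nilpotencyClass x), coeff m f • x ^ m := by
  simp only [Algebra.smul_def]
  exact eval₂_trunc_eq_sum_range x (algebraMap R B) _ f

theorem proj_nilpotentEval (𝒜 : ℕ → Submodule R B) [GradedAlgebra 𝒜] (hx : IsNilpotent x)
    (hx1 : x ∈ 𝒜 1) (f : R⟦X⟧) (k : ℕ) :
    GradedAlgebra.proj 𝒜 k (nilpotentEval hx f) = coeff k f • x ^ k := by
  have hpow : ∀ m, GradedAlgebra.proj 𝒜 k (x ^ m) = if m = k then x ^ m else 0 := fun m => by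
    have hm : x ^ m ∈ 𝒜 m := by simpa using SetLike.pow_mem_graded m hx1
    split_ifs with h
    · exact h ▸ DirectSum.decompose_of_mem_same 𝒜 hm
    · exact DirectSum.decompose_of_mem_ne 𝒜 hm h
  simp only [nilpotentEval_apply, map_sum, map_smul, hpow, smul_ite, smul_zero]
  rw [Finset.sum_ite_eq', ite_eq_left_iff, Finset.mem_range, not_lt]
  exact fun h => by rw [pow_eq_zero_of_le h (pow_nilpotencyClass hx), smul_zero]

end NilpotentEval

section ExpAndJ

open PowerSeries

variable {x : A}

theorem nexp_eq_nilpotentEval (hx : IsNilpotent x) : nexp x = nilpotentEval hx (exp ℝ) := by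
  simp [nexp, nilpotentEval_apply, exp]

theorem nexp_add {y : A} (hx : IsNilpotent x) (hy : IsNilpotent y) :
    nexp (x + y) = nexp x * nexp y := by
  let _ : Module ℚ A := Module.compHom A (algebraMap ℚ ℝ)
  have nexp_eq_exp (z : A) : nexp z = IsNilpotent.exp z := by
    refine Finset.sum_congr rfl fun m _ => ?_
    change _ = algebraMap ℚ ℝ (m.factorial : ℚ)⁻¹ • z ^ m
    rw [map_inv₀, map_natCast]
  simp only [nexp_eq_exp, IsNilpotent.exp_add_of_commute (Commute.all x y) hx hy]

theorem nexp_sum {ι : Type*} (s : Finset ι) {x : ι → A} (hx : ∀ i, IsNilpotent (x i)) :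
    nexp (∑ i ∈ s, x i) = ∏ i ∈ s, nexp (x i) := by
  induction s using Finset.induction_on with
  | empty =>
    rw [Finset.sum_empty, Finset.prod_empty, nexp_eq_nilpotentEval IsNilpotent.zero,
      nilpotentEval_apply]
    nontriviality A
    simp
  | insert a s ha ih =>
    rw [Finset.sum_insert ha, Finset.prod_insert ha,
      nexp_add (hx a) (isNilpotent_sum fun i _ => hx i), ih]

/-- The power series whose value at a nilpotent `x` is `Jf a b x`. -/
def JSeries (a b : ℝ) : ℝ⟦X⟧ :=
  PowerSeries.mk fun m => (-1) ^ m * ((b ^ (m + 1) - a ^ (m + 1)) / (m + 1).factorial)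

theorem Jf_eq_nilpotentEval (a b : ℝ) (hx : IsNilpotent x) :
    Jf a b x = nilpotentEval hx (JSeries a b) := by
  simp only [Jf, nilpotentEval_apply, JSeries, coeff_mk]

theorem X_mul_JSeries (a b : ℝ) :
    X * JSeries a b = rescale (-a) (exp ℝ) - rescale (-b) (exp ℝ) := by
  ext m
  cases m with
  | zero =>
    rw [coeff_zero_X_mul, map_sub, coeff_rescale, coeff_rescale]
    simp
  | succ m =>
    simp only [coeff_succ_X_mul, JSeries, coeff_mk, map_sub, coeff_rescale, coeff_exp, neg_pow a,
      neg_pow b, map_div₀, map_one, map_natCast]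
    ring

-- Both sides are `∫_{-1}^a exp (-ρX) dρ`, by the substitution `ρ ↦ ρ - 1`; multiplying by `X`
-- turns this into the addition law of the exponential.
theorem JSeries_neg_one (a : ℝ) : JSeries (-1) a = exp ℝ * JSeries 0 (1 + a) := by
  have exp_mul_rescale (b : ℝ) : exp ℝ * rescale b (exp ℝ) = rescale (1 + b) (exp ℝ) := by
    simpa using exp_mul_exp_eq_exp_add (1 : ℝ) b
  refine mul_left_cancel₀ X_ne_zero ?_
  rw [mul_left_comm, X_mul_JSeries, X_mul_JSeries, mul_sub, exp_mul_rescale, exp_mul_rescale]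
  ring_nf

theorem Jf_neg_one (a : ℝ) (hx : IsNilpotent x) : Jf (-1) a x = nexp x * Jf 0 (1 + a) x := by
  rw [Jf_eq_nilpotentEval _ _ hx, Jf_eq_nilpotentEval _ _ hx, nexp_eq_nilpotentEval hx,
    JSeries_neg_one, map_mul]

theorem Jf_eq_sub (a b : ℝ) (x : A) : Jf a b x = Jf 0 b x - Jf 0 a x := by
  simp only [Jf, ← Finset.sum_sub_distrib, ← sub_smul]
  refine Finset.sum_congr rfl fun m _ => ?_
  congr 1
  ring

theorem isUnit_Jf_zero_one (hx : IsNilpotent x) : IsUnit (Jf 0 1 x) := by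
  have hJ : IsUnit (JSeries 0 1) := by
    rw [isUnit_iff_constantCoeff, ← coeff_zero_eq_constantCoeff_apply]
    simp [JSeries]
  exact Jf_eq_nilpotentEval 0 1 hx ▸ hJ.map (nilpotentEval hx)

end ExpAndJ

section Weights

variable {S : Type*} [Fintype S] [LinearOrder S]

theorem sum_filter_le_sub_of_covBy {M : Type*} [AddCommGroup M] {η : S} (hη : IsBot η)
    {u v : S → M} (huv : ∀ σ σ', σ ⋖ σ' → u σ' = v σ) (s : S) :
    ∑ σ ∈ Finset.univ.filter (fun σ => σ ≤ s), (v σ - u σ) = v s - u η := by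
  induction s using WellFoundedLT.induction with
  | ind s ih =>
    rcases (hη s).eq_or_lt with rfl | hs
    · have hfilter : Finset.univ.filter (fun σ => σ ≤ η) = {η} := by
        ext σ
        simpa using ⟨fun h => h.antisymm (hη σ), le_of_eq⟩
      rw [hfilter, Finset.sum_singleton]
    · obtain ⟨t, -, ht⟩ := exists_le_covBy_of_lt hs
      have hfilter : Finset.univ.filter (fun σ => σ ≤ s) =
          insert s (Finset.univ.filter (fun σ => σ ≤ t)) := by
        ext σ
        simp [le_iff_eq_or_lt (b := s), ht.lt_iff_le_left]
      rw [hfilter, Finset.sum_insert (by simpa using ht.lt), ih t ht.lt, huv t s ht]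
      abel

/-- The extension of a weight function `α`, defined on the covers of a finite chain with least
element `η` and greatest element `τ`, to functions `αp = α_+` and `αm = α_-` on the chain itself:
a cover is encoded as a pair `(σ, σ')` with `σ ⋖ σ'`, and `α_+(σ) = α_-(σ') = α(σ, σ')`. -/
structure IsWeightExtension (η τ : S) (α : S × S → ℝ) (αp αm : S → ℝ) : Prop where
  isBot : IsBot η
  isTop : IsTop τ
  αp_top : αp τ = 0
  αp_of_covBy : ∀ σ σ', σ ⋖ σ' → αp σ = α (σ, σ')
  αm_bot : αm η = -1
  αm_of_covBy : ∀ σ σ', σ ⋖ σ' → αm σ' = α (σ, σ')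

theorem IsWeightExtension.sum_Jf_filter_le {η τ : S} {α : S × S → ℝ} {αp αm : S → ℝ}
    (hw : IsWeightExtension η τ α αp αm) {x : A} (hx : IsNilpotent x) (s : S) :
    ∑ σ ∈ Finset.univ.filter (fun σ => σ ≤ s), Jf (αm σ) (αp σ) x =
      nexp x * Jf 0 (1 + αp s) x := by
  have huv (σ σ' : S) (h : σ ⋖ σ') : Jf 0 (αm σ') x = Jf 0 (αp σ) x := by
    rw [hw.αm_of_covBy σ σ' h, hw.αp_of_covBy σ σ' h]
  simp only [Jf_eq_sub (αm _) (αp _) x]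
  rw [sum_filter_le_sub_of_covBy hw.isBot huv, hw.αm_bot, ← Jf_eq_sub, Jf_neg_one _ hx]

end Weights

section ClosedForm

/-- The set `Σ'` of covers of a finite chain. -/
abbrev coverPairs (S : Type*) [Fintype S] [LinearOrder S] : Finset (S × S) :=
  Finset.univ.filter (fun p : S × S => p.1 ⋖ p.2)

theorem mem_coverPairs {S : Type*} [Fintype S] [LinearOrder S] {p : S × S} :
    p ∈ coverPairs S ↔ p.1 ⋖ p.2 :=
  Finset.mem_filter_univ p

/-- The multi-indices of covers on `I`, that is, the product of the `Σ'_i` for `i ∈ I`. -/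
abbrev coverTuples (Sig : Fin n → Type*) [∀ i, Fintype (Sig i)] [∀ i, LinearOrder (Sig i)]
    (I : Finset (Fin n)) : Finset ((i : I) → Sig i.1 × Sig i.1) :=
  Fintype.piFinset fun i : I => coverPairs (Sig i.1)

theorem mem_coverTuples {I : Finset (Fin n)} {lam : (i : I) → Sig i.1 × Sig i.1} :
    lam ∈ coverTuples Sig I ↔ ∀ i : I, (lam i).1 ⋖ (lam i).2 := by
  simp

/-- The factor by which `h_{I,λ}` enters the parabolic Chern character, where `s = D`, the family
`x` is `(D_i)_{i ∈ I}`, and `β i` is the shifted weight `1 + α_i(λ_i)`. -/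
def parFactor {ι : Type*} [Fintype ι] (s : A) (β : ι → ℝ) (x : ι → A) : A :=
  nexp s * (∏ i, Jf 0 (β i) (x i) - ∏ i, Jf 0 1 (x i))

/-- The contribution of the intersection of the divisors `D_i`, `i ∈ I`, to the parabolic Chern
character, where `h` stands for the family `λ ↦ h_{I,λ}`. -/
def parTerm (D : Fin n → A) (α : ∀ i, Sig i × Sig i → ℝ) (I : Finset (Fin n))
    (h : ((i : I) → Sig i.1 × Sig i.1) → A) : A :=
  (-1) ^ I.card * ∑ lam ∈ coverTuples Sig I, h lam *
    parFactor (∑ i, D i) (fun i : I => 1 + α i.1 (lam i)) (fun i : I => D i.1)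

theorem sum_cSigma_mul {B : Type*} [CommRing B] (c : B)
    (g : ∀ I : Finset (Fin n), ((i : I) → Sig i.1 × Sig i.1) → B) (w : (∀ i, Sig i) → B) :
    ∑ σ, cSigma c g σ * w σ = c * ∑ σ, w σ +
      ∑ I ∈ Finset.univ.filter (fun I : Finset (Fin n) => I.Nonempty), (-1) ^ I.card *
        ∑ lam ∈ coverTuples Sig I, g I lam *
          ∑ σ ∈ Finset.univ.filter (fun σ : ∀ i, Sig i => ∀ i : I, σ i.1 ≤ (lam i).1), w σ := by
  simp only [cSigma, add_mul, Finset.sum_add_distrib, ← Finset.mul_sum]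
  congr 1
  simp only [Finset.sum_mul, mul_assoc]
  rw [Finset.sum_comm]
  refine Finset.sum_congr rfl fun I _ => ?_
  rw [← Finset.mul_sum]
  congr 1
  simp only [Finset.mul_sum]
  refine Finset.sum_comm' fun σ lam => ?_
  simp [forall_and, and_comm]

theorem sum_prod_Jf_filter_le {D : Fin n → A} (hD : ∀ i, IsNilpotent (D i)) {η τ : ∀ i, Sig i}
    {α : ∀ i, Sig i × Sig i → ℝ} {αp αm : ∀ i, Sig i → ℝ}
    (hw : ∀ i, IsWeightExtension (η i) (τ i) (α i) (αp i) (αm i))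
    {I : Finset (Fin n)} {lam : (i : I) → Sig i.1 × Sig i.1} (hlam : lam ∈ coverTuples Sig I) :
    ∑ σ ∈ Finset.univ.filter (fun σ : ∀ i, Sig i => ∀ i : I, σ i.1 ≤ (lam i).1),
        ∏ i, Jf (αm i (σ i)) (αp i (σ i)) (D i) =
      nexp (∑ i, D i) *
        ((∏ i : I, Jf 0 (1 + α i.1 (lam i)) (D i.1)) * ∏ i ∈ Iᶜ, Jf 0 1 (D i)) := by
  -- The coordinates outside `I` are unconstrained, that is, bounded by the greatest element.
  let s (i : Fin n) : Sig i := if h : i ∈ I then (lam ⟨i, h⟩).1 else τ i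
  have hfilter : Finset.univ.filter (fun σ : ∀ i, Sig i => ∀ i : I, σ i.1 ≤ (lam i).1) =
      Fintype.piFinset fun i => Finset.univ.filter (fun t => t ≤ s i) := by
    ext σ
    simp only [Finset.mem_filter_univ, Fintype.mem_piFinset, Subtype.forall]
    refine forall_congr' fun i => ?_
    by_cases hi : i ∈ I
    · simp [s, hi]
    · simpa [s, hi] using (hw i).isTop (σ i)
  have hmem (i : I) : αp i.1 (s i.1) = α i.1 (lam i) := by
    simp [s, (hw i.1).αp_of_covBy _ _ (mem_coverTuples.mp hlam i)]
  have hcompl (i : Fin n) (hi : i ∈ Iᶜ) : αp i (s i) = 0 := by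
    simp [s, Finset.mem_compl.mp hi, (hw i).αp_top]
  rw [hfilter, ← Finset.prod_univ_sum (fun i => Finset.univ.filter (fun t => t ≤ s i))
    (fun i t => Jf (αm i t) (αp i t) (D i))]
  simp only [fun i => (hw i).sum_Jf_filter_le (hD i) (s i)]
  rw [Finset.prod_mul_distrib, ← nexp_sum _ hD, ← Finset.prod_mul_prod_compl I,
    ← Finset.prod_coe_sort I]
  congr 2
  · exact Finset.prod_congr rfl fun i _ => by rw [hmem i]
  · exact Finset.prod_congr rfl fun i hi => by rw [hcompl i hi, add_zero]

theorem sum_prod_Jf {D : Fin n → A} (hD : ∀ i, IsNilpotent (D i)) {η τ : ∀ i, Sig i}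
    {α : ∀ i, Sig i × Sig i → ℝ} {αp αm : ∀ i, Sig i → ℝ}
    (hw : ∀ i, IsWeightExtension (η i) (τ i) (α i) (αp i) (αm i)) :
    ∑ σ : ∀ i, Sig i, ∏ i, Jf (αm i (σ i)) (αp i (σ i)) (D i) =
      nexp (∑ i, D i) * ∏ i, Jf 0 1 (D i) := by
  rw [nexp_sum _ hD, ← Finset.prod_mul_distrib,
    ← Fintype.prod_sum fun i t => Jf (αm i t) (αp i t) (D i)]
  refine Finset.prod_congr rfl fun i _ => ?_
  have h := (hw i).sum_Jf_filter_le (hD i) (τ i)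
  rwa [(hw i).αp_top, add_zero, Finset.filter_true_of_mem fun t _ => (hw i).isTop t] at h

theorem cSigma_bot {B : Type*} [CommRing B] (c : B)
    (g : ∀ I : Finset (Fin n), ((i : I) → Sig i.1 × Sig i.1) → B)
    {η : ∀ i, Sig i} (hη : ∀ i, IsBot (η i)) :
    cSigma c g η = c +
      ∑ I ∈ Finset.univ.filter (fun I : Finset (Fin n) => I.Nonempty), (-1) ^ I.card *
        ∑ lam ∈ coverTuples Sig I, g I lam := by
  rw [cSigma]
  congr 1
  refine Finset.sum_congr rfl fun I _ => ?_
  congr 2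
  ext lam
  simp [hη _ _]

theorem chPar_eq {D : Fin n → A} (hD : ∀ i, IsNilpotent (D i)) {η τ : ∀ i, Sig i}
    {α : ∀ i, Sig i × Sig i → ℝ} {αp αm : ∀ i, Sig i → ℝ}
    (hw : ∀ i, IsWeightExtension (η i) (τ i) (α i) (αp i) (αm i)) (c : A)
    (g hh : ∀ I : Finset (Fin n), ((i : I) → Sig i.1 × Sig i.1) → A)
    (hGRR : ∀ I : Finset (Fin n), I.Nonempty → ∀ lam ∈ coverTuples Sig I,
      g I lam = (∏ i : I, Jf 0 1 (D i.1)) * hh I lam)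
    (htwist : cSigma c g η * nexp (∑ i, D i) = c) :
    chPar D αm αp c g =
      c + ∑ I ∈ Finset.univ.filter (fun I : Finset (Fin n) => I.Nonempty),
        parTerm D α I (hh I) := by
  have hJ : IsUnit (∏ i, Jf 0 1 (D i)) :=
    IsUnit.prod_univ_iff.mpr fun i => isUnit_Jf_zero_one (hD i)
  have hterm (I : Finset (Fin n)) (hI : I.Nonempty) (lam) (hlam : lam ∈ coverTuples Sig I) :
      g I lam * ∑ σ ∈ Finset.univ.filter (fun σ : ∀ i, Sig i => ∀ i : I, σ i.1 ≤ (lam i).1),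
        ∏ i, Jf (αm i (σ i)) (αp i (σ i)) (D i) =
      (∏ i, Jf 0 1 (D i)) * (g I lam * nexp (∑ i, D i) + hh I lam *
        parFactor (∑ i, D i) (fun i : I => 1 + α i.1 (lam i)) (fun i : I => D i.1)) := by
    rw [sum_prod_Jf_filter_le hD hw hlam, hGRR I hI lam hlam, ← Finset.prod_mul_prod_compl I,
      ← Finset.prod_coe_sort I, parFactor]
    ring
  have hsum : ∑ σ, cSigma c g σ * ∏ i, Jf (αm i (σ i)) (αp i (σ i)) (D i) =
      (∏ i, Jf 0 1 (D i)) * (cSigma c g η * nexp (∑ i, D i) +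
        ∑ I ∈ Finset.univ.filter (fun I : Finset (Fin n) => I.Nonempty),
          parTerm D α I (hh I)) := by
    rw [sum_cSigma_mul, sum_prod_Jf hD hw, cSigma_bot c g fun i => (hw i).isBot, add_mul,
      add_assoc, mul_add, Finset.sum_mul, ← Finset.sum_add_distrib, Finset.mul_sum]
    congr 1
    · ring
    · refine Finset.sum_congr rfl fun I hI => ?_
      rw [Finset.sum_congr rfl (hterm I ((Finset.mem_filter_univ I).mp hI)), ← Finset.mul_sum,
        Finset.sum_add_distrib, ← Finset.sum_mul, parTerm]
      ring
  rw [chPar, hsum, htwist, Ring.inverse_mul_cancel_left _ _ hJ]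

end ClosedForm

section Graded

open Finset.HasAntidiagonal (antidiagonal)
open GradedAlgebra (proj)

section Proj

variable {R B : Type*} [CommRing R] [CommRing B] [Algebra R B] (𝒜 : ℕ → Submodule R B)
  [GradedAlgebra 𝒜]

theorem proj_mul (k : ℕ) (a b : B) :
    proj 𝒜 k (a * b) = ∑ ij ∈ antidiagonal k,
      proj 𝒜 ij.1 a * proj 𝒜 ij.2 b := by
  simp only [GradedAlgebra.proj_apply, DirectSum.decompose_mul,
    DirectSum.coe_mul_apply_eq_sum_antidiagonal]

theorem proj_zero_mul (a b : B) :
    proj 𝒜 0 (a * b) = proj 𝒜 0 a * proj 𝒜 0 b := by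
  rw [proj_mul]
  simp

theorem proj_one_mul (a b : B) :
    proj 𝒜 1 (a * b) = proj 𝒜 0 a * proj 𝒜 1 b +
      proj 𝒜 1 a * proj 𝒜 0 b := by
  rw [proj_mul]
  simp [Finset.Nat.antidiagonal_succ]

theorem proj_mul_eq_zero_of_lt {a : B} {q k : ℕ} (ha : ∀ m < q, proj 𝒜 m a = 0)
    (hk : k < q) (b : B) : proj 𝒜 k (a * b) = 0 := by
  rw [proj_mul]
  refine Finset.sum_eq_zero fun ij hij => ?_
  rw [ha ij.1 ((Finset.HasAntidiagonal.antidiagonal.fst_le hij).trans_lt hk), zero_mul]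

theorem proj_add_mul {a : B} {q : ℕ} (ha : ∀ m < q, proj 𝒜 m a = 0) (k : ℕ)
    (b : B) :
    proj 𝒜 (q + k) (a * b) = ∑ ij ∈ antidiagonal k,
      proj 𝒜 (q + ij.1) a * proj 𝒜 ij.2 b := by
  rw [proj_mul, Finset.Nat.sum_antidiagonal_eq_sum_range_succ fun i j =>
    proj 𝒜 i a * proj 𝒜 j b,
    Finset.Nat.sum_antidiagonal_eq_sum_range_succ fun i j =>
    proj 𝒜 (q + i) a * proj 𝒜 j b,
    ← Nat.add_succ, Finset.sum_range_add, Finset.sum_eq_zero, zero_add]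
  · simp only [Nat.add_sub_add_left]
  · intro m hm
    rw [ha m (Finset.mem_range.mp hm), zero_mul]

end Proj

variable (𝒜 : ℕ → Submodule ℝ A) [GradedAlgebra 𝒜] {x : A}

theorem proj_nexp (hx : IsNilpotent x) (hx1 : x ∈ 𝒜 1) (k : ℕ) :
    proj 𝒜 k (nexp x) = (k.factorial : ℝ)⁻¹ • x ^ k := by
  rw [nexp_eq_nilpotentEval hx, proj_nilpotentEval 𝒜 hx hx1]
  simp [PowerSeries.coeff_exp]

theorem proj_Jf (b : ℝ) (hx : IsNilpotent x) (hx1 : x ∈ 𝒜 1) (k : ℕ) :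
    proj 𝒜 k (Jf 0 b x) =
      ((-1) ^ k * (b ^ (k + 1) / (k + 1).factorial)) • x ^ k := by
  rw [Jf_eq_nilpotentEval 0 b hx, proj_nilpotentEval 𝒜 hx hx1]
  simp [JSeries]

section ProdJf

variable {ι : Type*} (s : Finset ι) (β : ι → ℝ) {x : ι → A}

theorem proj_zero_prod_Jf (hx : ∀ i, IsNilpotent (x i)) (hx1 : ∀ i, x i ∈ 𝒜 1) :
    proj 𝒜 0 (∏ i ∈ s, Jf 0 (β i) (x i)) = (∏ i ∈ s, β i) • 1 := by
  induction s using Finset.induction_on with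
  | empty => simpa using DirectSum.decompose_of_mem_same 𝒜 (SetLike.one_mem_graded 𝒜)
  | insert a s ha ih =>
    rw [Finset.prod_insert ha, Finset.prod_insert ha, proj_zero_mul, ih, proj_Jf 𝒜 _ (hx a) (hx1 a)]
    simp [smul_smul, mul_comm]

theorem proj_one_prod_Jf (hx : ∀ i, IsNilpotent (x i)) (hx1 : ∀ i, x i ∈ 𝒜 1) :
    proj 𝒜 1 (∏ i ∈ s, Jf 0 (β i) (x i)) =
      -∑ i ∈ s, ((∏ j ∈ s, β j) * β i / 2) • x i := by
  induction s using Finset.induction_on with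
  | empty =>
    simpa using DirectSum.decompose_of_mem_ne 𝒜 (SetLike.one_mem_graded 𝒜) zero_ne_one
  | insert a s ha ih =>
    rw [Finset.prod_insert ha, Finset.prod_insert ha, Finset.sum_insert ha, proj_one_mul, ih,
      proj_zero_prod_Jf 𝒜 s β hx hx1, proj_Jf 𝒜 _ (hx a) (hx1 a), proj_Jf 𝒜 _ (hx a) (hx1 a)]
    simp only [pow_zero, pow_one, zero_add, one_add_one_eq_two, Nat.factorial_one,
      Nat.factorial_two, Nat.cast_one, Nat.cast_ofNat, div_one, one_mul, mul_one, mul_neg,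
      neg_mul, neg_smul, smul_neg, Finset.smul_sum, smul_mul_assoc, mul_smul_comm, smul_smul,
      mul_assoc, mul_div_assoc, neg_add_rev, add_right_inj, neg_inj]
    congr 1
    ring

end ProdJf

section ParFactor

variable {ι : Type*} [Fintype ι] {s : A} (β : ι → ℝ) {x : ι → A}

theorem proj_zero_parFactor (hs : IsNilpotent s) (hs1 : s ∈ 𝒜 1) (hx : ∀ i, IsNilpotent (x i))
    (hx1 : ∀ i, x i ∈ 𝒜 1) :
    proj 𝒜 0 (parFactor s β x) = (∏ i, β i - 1) • 1 := by
  rw [parFactor, proj_zero_mul, map_sub,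
    proj_zero_prod_Jf 𝒜 _ β hx hx1, proj_zero_prod_Jf 𝒜 _ (fun _ => 1) hx hx1,
    proj_nexp 𝒜 hs hs1]
  simp [sub_smul]

theorem proj_one_parFactor (hs : IsNilpotent s) (hs1 : s ∈ 𝒜 1) (hx : ∀ i, IsNilpotent (x i))
    (hx1 : ∀ i, x i ∈ 𝒜 1) :
    proj 𝒜 1 (parFactor s β x) =
      (∏ i, β i - 1) • s - ∑ i, (((∏ j, β j) * β i - 1) / 2) • x i := by
  rw [parFactor, proj_one_mul, map_sub, map_sub, proj_zero_prod_Jf 𝒜 _ β hx hx1,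
    proj_zero_prod_Jf 𝒜 _ (fun _ => 1) hx hx1, proj_one_prod_Jf 𝒜 _ β hx hx1,
    proj_one_prod_Jf 𝒜 _ (fun _ => 1) hx hx1, proj_nexp 𝒜 hs hs1, proj_nexp 𝒜 hs hs1]
  simp only [Finset.prod_const_one, one_mul, sub_smul, sub_div, Finset.sum_sub_distrib,
    Nat.factorial_zero, Nat.factorial_one, Nat.cast_one, inv_one, pow_zero, pow_one, one_smul,
    mul_sub, mul_smul_comm, mul_one]
  abel

theorem proj_parFactor_of_unique [Unique ι] (hs : IsNilpotent s) (hs1 : s ∈ 𝒜 1)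
    (hx : IsNilpotent (x default)) (hx1 : x default ∈ 𝒜 1) (k : ℕ) :
    proj 𝒜 k (parFactor s β x) = ∑ ij ∈ antidiagonal k,
      ((-1) ^ ij.2 * (β default ^ (ij.2 + 1) - 1) / (ij.1.factorial * (ij.2 + 1).factorial)) •
        (s ^ ij.1 * x default ^ ij.2) := by
  rw [parFactor, Fintype.prod_unique, Fintype.prod_unique, proj_mul]
  refine Finset.sum_congr rfl fun ij _ => ?_
  rw [map_sub, proj_nexp 𝒜 hs hs1, proj_Jf 𝒜 _ hx hx1, proj_Jf 𝒜 _ hx hx1, ← sub_smul,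
    smul_mul_smul_comm]
  congr 1
  field_simp
  ring

theorem proj_mul_parFactor {h : A} {q : ℕ} (hh : ∀ m < q, proj 𝒜 m h = 0)
    (hs : IsNilpotent s) (hs1 : s ∈ 𝒜 1) (hx : ∀ i, IsNilpotent (x i)) (hx1 : ∀ i, x i ∈ 𝒜 1) :
    proj 𝒜 q (h * parFactor s β x) =
      (∏ i, β i - 1) • proj 𝒜 q h := by
  have h := proj_add_mul 𝒜 hh 0 (parFactor s β x)
  simpa [proj_zero_parFactor 𝒜 β hs hs1 hx hx1, -GradedAlgebra.proj_apply] using h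

theorem proj_succ_mul_parFactor {h : A} {q : ℕ} (hh : ∀ m < q, proj 𝒜 m h = 0)
    (hs : IsNilpotent s) (hs1 : s ∈ 𝒜 1) (hx : ∀ i, IsNilpotent (x i)) (hx1 : ∀ i, x i ∈ 𝒜 1) :
    proj 𝒜 (q + 1) (h * parFactor s β x) =
      (∏ i, β i - 1) • (proj 𝒜 q h * s + proj 𝒜 (q + 1) h) -
        ∑ i, (((∏ j, β j) * β i - 1) / 2) • (proj 𝒜 q h * x i) := by
  rw [proj_add_mul 𝒜 hh 1, Finset.Nat.sum_antidiagonal_succ]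
  simp only [Finset.Nat.antidiagonal_zero, Finset.sum_singleton, zero_add, add_zero,
    proj_zero_parFactor 𝒜 β hs hs1 hx hx1, proj_one_parFactor 𝒜 β hs hs1 hx hx1, mul_sub,
    Finset.mul_sum, mul_smul_comm, mul_one, smul_add]
  abel

theorem proj_three_mul_parFactor_of_unique [Unique ι] {h : A}
    (hh : ∀ m < 1, proj 𝒜 m h = 0) (hs : IsNilpotent s) (hs1 : s ∈ 𝒜 1)
    (hx : IsNilpotent (x default)) (hx1 : x default ∈ 𝒜 1) (a : ι → ℝ) :
    proj 𝒜 3 (h * parFactor s (fun i => 1 + a i) x) =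
      ((1 : ℝ) / 2 * a default) • (proj 𝒜 1 h * s ^ 2) -
      ((1 : ℝ) / 2 * (a default ^ 2 + 2 * a default)) • (proj 𝒜 2 h * x default) +
      ((1 : ℝ) / 6 * (a default ^ 3 + 3 * a default ^ 2 + 3 * a default)) •
        (proj 𝒜 1 h * x default ^ 2) +
      a default • (proj 𝒜 2 h * s) -
      ((1 : ℝ) / 2 * (a default ^ 2 + 2 * a default)) •
        (proj 𝒜 1 h * (x default * s)) +
      a default • proj 𝒜 3 h := by
  have hW (k : ℕ) := proj_parFactor_of_unique 𝒜 (fun i => 1 + a i) hs hs1 hx hx1 k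
  have hW0 : proj 𝒜 0 (parFactor s (fun i => 1 + a i) x) = a default • 1 := by
    simp [hW, -GradedAlgebra.proj_apply]
  have hW1 : proj 𝒜 1 (parFactor s (fun i => 1 + a i) x) =
      a default • s - ((1 : ℝ) / 2 * (a default ^ 2 + 2 * a default)) • x default := by
    rw [hW, Finset.Nat.sum_antidiagonal_eq_sum_range_succ_mk]
    simp only [Finset.sum_range_succ, Finset.sum_range_zero, zero_add, pow_zero, one_mul, mul_one,
      pow_one, Nat.sub_self, Nat.sub_zero, Nat.factorial_zero, Nat.factorial_one, Nat.factorial_two,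
      Nat.cast_one, Nat.cast_ofNat, one_add_one_eq_two]
    module
  have hW2 : proj 𝒜 2 (parFactor s (fun i => 1 + a i) x) =
      ((1 : ℝ) / 2 * a default) • s ^ 2 -
      ((1 : ℝ) / 2 * (a default ^ 2 + 2 * a default)) • (x default * s) +
      ((1 : ℝ) / 6 * (a default ^ 3 + 3 * a default ^ 2 + 3 * a default)) • x default ^ 2 := by
    rw [hW, Finset.Nat.sum_antidiagonal_eq_sum_range_succ_mk]
    simp only [Finset.sum_range_succ, Finset.sum_range_zero, zero_add, pow_zero, one_mul, mul_one,
      pow_one, Nat.sub_self, Nat.sub_zero, Nat.add_one_sub_one, Nat.factorial, Nat.cast_mul,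
      Nat.cast_succ, Nat.cast_zero, mul_comm s]
    module
  rw [show 3 = 1 + 2 from rfl, proj_add_mul 𝒜 hh 2,
    Finset.Nat.sum_antidiagonal_eq_sum_range_succ_mk]
  simp only [Finset.sum_range_succ, Finset.sum_range_zero, zero_add, add_zero,
    Nat.sub_self, Nat.sub_zero, Nat.add_one_sub_one, one_add_one_eq_two,
    hW0, hW1, hW2, mul_add, mul_sub, mul_smul_comm, mul_one]
  abel

end ParFactor

end Graded

section Reindexing

section PowersetCard

variable {ι M : Type*} [AddCommMonoid M]

theorem sum_nonempty_eq_sum_powersetCard [Fintype ι] {m : ℕ} {F : Finset ι → M}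
    (hF : ∀ I, m < I.card → F I = 0) :
    ∑ I ∈ Finset.univ.filter (·.Nonempty), F I =
      ∑ k ∈ Finset.Icc 1 m, ∑ I ∈ Finset.powersetCard k Finset.univ, F I := by
  have hcard (I : Finset ι) :
      ∑ k ∈ Finset.Icc 1 m, (if I.card = k then F I else 0) = if I.Nonempty then F I else 0 := by
    rw [Finset.sum_ite_eq]
    rcases I.eq_empty_or_nonempty with rfl | hI
    · simp
    · rcases le_or_gt I.card m with hle | hlt
      · simp [hI, hle]
      · simp [hF I hlt]
  simp only [← Finset.univ_filter_card_eq, Finset.sum_filter]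
  rw [Finset.sum_comm]
  exact Finset.sum_congr rfl fun I _ => (hcard I).symm

variable [LinearOrder ι]

theorem sum_powersetCard_succ (s : Finset ι) (k : ℕ) (F : Finset ι → M) :
    ∑ I ∈ s.powersetCard (k + 1), F I =
      ∑ i ∈ s, ∑ J ∈ (s.filter (i < ·)).powersetCard k, F (insert i J) := by
  induction s using Finset.induction_on_min with
  | empty => simp [Finset.powersetCard_eq_empty.mpr (Finset.card_empty.trans_lt k.succ_pos)]
  | insert a s ha ih =>
    have has : a ∉ s := fun h => (ha a h).false
    have hdisj : Disjoint (s.powersetCard (k + 1)) ((s.powersetCard k).image (insert a)) := by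
      refine Finset.disjoint_left.mpr fun I hI hI' => has ?_
      obtain ⟨J, -, rfl⟩ := Finset.mem_image.mp hI'
      exact (Finset.mem_powersetCard.mp hI).1 (Finset.mem_insert_self a J)
    have hinj : Set.InjOn (insert a) (s.powersetCard k : Set (Finset ι)) :=
      Finset.insert_erase_invOn.2.injOn.mono fun I hI h =>
        has ((Finset.mem_powersetCard.mp hI).1 h)
    have hfilter_a : (insert a s).filter (a < ·) = s := by
      rw [Finset.filter_insert, if_neg (lt_irrefl a), Finset.filter_true_of_mem ha]
    have hfilter (i) (hi : i ∈ s) : (insert a s).filter (i < ·) = s.filter (i < ·) := by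
      rw [Finset.filter_insert, if_neg (ha i hi).asymm]
    rw [Finset.powersetCard_succ_insert has, Finset.sum_union hdisj, Finset.sum_image hinj, ih,
      Finset.sum_insert has, hfilter_a, add_comm]
    exact congrArg _ (Finset.sum_congr rfl fun i hi => by rw [hfilter i hi])

theorem sum_powersetCard_one (s : Finset ι) (F : Finset ι → M) :
    ∑ I ∈ s.powersetCard 1, F I = ∑ i ∈ s, F {i} := by
  simp [sum_powersetCard_succ]

theorem sum_powersetCard_two (s : Finset ι) (F : Finset ι → M) :
    ∑ I ∈ s.powersetCard 2, F I = ∑ i ∈ s, ∑ j ∈ s.filter (i < ·), F {i, j} := by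
  simp [sum_powersetCard_succ]

theorem sum_powersetCard_three (s : Finset ι) (F : Finset ι → M) :
    ∑ I ∈ s.powersetCard 3, F I =
      ∑ i ∈ s, ∑ j ∈ s.filter (i < ·), ∑ l ∈ s.filter (j < ·), F {i, j, l} := by
  rw [sum_powersetCard_succ]
  refine Finset.sum_congr rfl fun i _ => ?_
  rw [sum_powersetCard_two]
  refine Finset.sum_congr rfl fun j hj => ?_
  congr 1
  ext l
  have hij := (Finset.mem_filter.mp hj).2
  simpa [and_assoc] using fun _ => hij.trans

theorem sum_nonempty_eq_of_three_lt_card [Fintype ι] [LocallyFiniteOrderTop ι] {F : Finset ι → M}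
    (hF : ∀ I, 3 < I.card → F I = 0) :
    ∑ I ∈ Finset.univ.filter (·.Nonempty), F I = ∑ i, F {i} +
      ∑ i, ∑ j ∈ Finset.Ioi i, F {i, j} +
      ∑ i, ∑ j ∈ Finset.Ioi i, ∑ l ∈ Finset.Ioi j, F {i, j, l} := by
  rw [sum_nonempty_eq_sum_powersetCard hF, show Finset.Icc 1 3 = {1, 2, 3} from rfl]
  simp [sum_powersetCard_one, sum_powersetCard_two, sum_powersetCard_three, add_assoc,
    Finset.filter_lt_eq_Ioi]

end PowersetCard

section CoverTuples

variable {X : Fin n → Type*}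

theorem lamOfPair_fst (i₁ i₂ : Fin n) (p₁ : X i₁ × X i₁) (p₂ : X i₂ × X i₂) (h) :
    lamOfPair i₁ i₂ p₁ p₂ ⟨i₁, h⟩ = p₁ := by
  simp [lamOfPair]

theorem lamOfPair_snd {i₁ i₂ : Fin n} (h₁₂ : i₁ ≠ i₂) (p₁ : X i₁ × X i₁) (p₂ : X i₂ × X i₂)
    (h) : lamOfPair i₁ i₂ p₁ p₂ ⟨i₂, h⟩ = p₂ := by
  simp [lamOfPair, h₁₂.symm]

theorem lamOfTriple_fst (i₁ i₂ i₃ : Fin n) (p₁ : X i₁ × X i₁) (p₂ : X i₂ × X i₂)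
    (p₃ : X i₃ × X i₃) (h) : lamOfTriple i₁ i₂ i₃ p₁ p₂ p₃ ⟨i₁, h⟩ = p₁ := by
  simp [lamOfTriple]

theorem lamOfTriple_snd {i₁ i₂ : Fin n} (i₃ : Fin n) (h₁₂ : i₁ ≠ i₂) (p₁ : X i₁ × X i₁)
    (p₂ : X i₂ × X i₂) (p₃ : X i₃ × X i₃) (h) :
    lamOfTriple i₁ i₂ i₃ p₁ p₂ p₃ ⟨i₂, h⟩ = p₂ := by
  simp [lamOfTriple, h₁₂.symm]

theorem lamOfTriple_trd {i₁ i₂ i₃ : Fin n} (h₁₃ : i₁ ≠ i₃) (h₂₃ : i₂ ≠ i₃) (p₁ : X i₁ × X i₁)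
    (p₂ : X i₂ × X i₂) (p₃ : X i₃ × X i₃) (h) :
    lamOfTriple i₁ i₂ i₃ p₁ p₂ p₃ ⟨i₃, h⟩ = p₃ := by
  simp [lamOfTriple, h₁₃.symm, h₂₃.symm]

theorem lamOfSingle_mem_coverTuples {i : Fin n} {p : Sig i × Sig i} (hp : p ∈ coverPairs (Sig i)) :
    lamOfSingle i p ∈ coverTuples Sig {i} := by
  refine Fintype.mem_piFinset.mpr fun ⟨j, hj⟩ => ?_
  obtain rfl := Finset.mem_singleton.mp hj
  exact hp

theorem lamOfPair_mem_coverTuples {i₁ i₂ : Fin n} (h₁₂ : i₁ ≠ i₂) {p₁ : Sig i₁ × Sig i₁}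
    {p₂ : Sig i₂ × Sig i₂} (hp₁ : p₁ ∈ coverPairs (Sig i₁)) (hp₂ : p₂ ∈ coverPairs (Sig i₂)) :
    lamOfPair i₁ i₂ p₁ p₂ ∈ coverTuples Sig {i₁, i₂} := by
  refine Fintype.mem_piFinset.mpr fun ⟨j, hj⟩ => ?_
  rcases (by simpa using hj : j = i₁ ∨ j = i₂) with rfl | rfl
  · rwa [lamOfPair_fst]
  · rwa [lamOfPair_snd h₁₂]

theorem lamOfTriple_mem_coverTuples {i₁ i₂ i₃ : Fin n} (h₁₂ : i₁ ≠ i₂) (h₁₃ : i₁ ≠ i₃)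
    (h₂₃ : i₂ ≠ i₃) {p₁ : Sig i₁ × Sig i₁} {p₂ : Sig i₂ × Sig i₂} {p₃ : Sig i₃ × Sig i₃}
    (hp₁ : p₁ ∈ coverPairs (Sig i₁)) (hp₂ : p₂ ∈ coverPairs (Sig i₂))
    (hp₃ : p₃ ∈ coverPairs (Sig i₃)) :
    lamOfTriple i₁ i₂ i₃ p₁ p₂ p₃ ∈ coverTuples Sig {i₁, i₂, i₃} := by
  refine Fintype.mem_piFinset.mpr fun ⟨j, hj⟩ => ?_
  rcases (by simpa using hj : j = i₁ ∨ j = i₂ ∨ j = i₃) with rfl | rfl | rfl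
  · rwa [lamOfTriple_fst]
  · rwa [lamOfTriple_snd _ h₁₂]
  · rwa [lamOfTriple_trd h₁₃ h₂₃]

variable {M : Type*} [AddCommMonoid M]

theorem sum_coverTuples_singleton (i : Fin n)
    (F : ((j : ({i} : Finset (Fin n))) → Sig j.1 × Sig j.1) → M) :
    ∑ lam ∈ coverTuples Sig {i}, F lam = ∑ p ∈ coverPairs (Sig i), F (lamOfSingle i p) := by
  have hinv (lam : (j : ({i} : Finset (Fin n))) → Sig j.1 × Sig j.1) :
      lamOfSingle i (lam ⟨i, Finset.mem_singleton_self i⟩) = lam := by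
    ext1 j
    obtain rfl := Subsingleton.elim j ⟨i, Finset.mem_singleton_self i⟩
    rfl
  refine Finset.sum_nbij' (fun lam => lam ⟨i, Finset.mem_singleton_self i⟩) (lamOfSingle i)
    (fun lam hlam => ?_) (fun p hp => ?_) (fun lam _ => hinv lam) (fun _ _ => rfl)
    fun lam _ => by rw [hinv]
  · exact Fintype.mem_piFinset.mp hlam ⟨i, _⟩
  · exact lamOfSingle_mem_coverTuples hp

theorem sum_coverTuples_pair {i₁ i₂ : Fin n} (h₁₂ : i₁ ≠ i₂)
    (F : ((j : ({i₁, i₂} : Finset (Fin n))) → Sig j.1 × Sig j.1) → M) :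
    ∑ lam ∈ coverTuples Sig {i₁, i₂}, F lam =
      ∑ p₁ ∈ coverPairs (Sig i₁), ∑ p₂ ∈ coverPairs (Sig i₂), F (lamOfPair i₁ i₂ p₁ p₂) := by
  have hinv (lam : (j : ({i₁, i₂} : Finset (Fin n))) → Sig j.1 × Sig j.1) :
      lamOfPair i₁ i₂ (lam ⟨i₁, by simp⟩) (lam ⟨i₂, by simp⟩) = lam := by
    ext1 ⟨j, hj⟩
    rcases (by simpa using hj : j = i₁ ∨ j = i₂) with rfl | rfl
    · exact lamOfPair_fst ..
    · exact lamOfPair_snd h₁₂ ..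
  rw [← Finset.sum_product']
  refine Finset.sum_nbij' (fun lam => (lam ⟨i₁, by simp⟩, lam ⟨i₂, by simp⟩))
    (fun p => lamOfPair i₁ i₂ p.1 p.2) (fun lam hlam => ?_) (fun p hp => ?_)
    (fun lam _ => hinv lam) (fun p _ => ?_) fun lam _ => by rw [hinv]
  · have h := Fintype.mem_piFinset.mp hlam
    exact Finset.mem_product.mpr ⟨h ⟨i₁, _⟩, h ⟨i₂, _⟩⟩
  · obtain ⟨hp₁, hp₂⟩ := Finset.mem_product.mp hp
    exact lamOfPair_mem_coverTuples h₁₂ hp₁ hp₂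
  · rw [lamOfPair_fst, lamOfPair_snd h₁₂]

theorem sum_coverTuples_triple {i₁ i₂ i₃ : Fin n} (h₁₂ : i₁ ≠ i₂) (h₁₃ : i₁ ≠ i₃) (h₂₃ : i₂ ≠ i₃)
    (F : ((j : ({i₁, i₂, i₃} : Finset (Fin n))) → Sig j.1 × Sig j.1) → M) :
    ∑ lam ∈ coverTuples Sig {i₁, i₂, i₃}, F lam =
      ∑ p₁ ∈ coverPairs (Sig i₁), ∑ p₂ ∈ coverPairs (Sig i₂), ∑ p₃ ∈ coverPairs (Sig i₃),
        F (lamOfTriple i₁ i₂ i₃ p₁ p₂ p₃) := by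
  have hinv (lam : (j : ({i₁, i₂, i₃} : Finset (Fin n))) → Sig j.1 × Sig j.1) :
      lamOfTriple i₁ i₂ i₃ (lam ⟨i₁, by simp⟩) (lam ⟨i₂, by simp⟩) (lam ⟨i₃, by simp⟩) = lam := by
    ext1 ⟨j, hj⟩
    rcases (by simpa using hj : j = i₁ ∨ j = i₂ ∨ j = i₃) with rfl | rfl | rfl
    · exact lamOfTriple_fst ..
    · exact lamOfTriple_snd _ h₁₂ ..
    · exact lamOfTriple_trd h₁₃ h₂₃ ..
  simp only [← Finset.sum_product']
  refine Finset.sum_nbij' (fun lam => (lam ⟨i₁, by simp⟩, lam ⟨i₂, by simp⟩, lam ⟨i₃, by simp⟩))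
    (fun p => lamOfTriple i₁ i₂ i₃ p.1 p.2.1 p.2.2) (fun lam hlam => ?_) (fun p hp => ?_)
    (fun lam _ => hinv lam) (fun p _ => ?_) fun lam _ => by rw [hinv]
  · have h := Fintype.mem_piFinset.mp hlam
    exact Finset.mem_product.mpr ⟨h ⟨i₁, _⟩, Finset.mem_product.mpr ⟨h ⟨i₂, _⟩, h ⟨i₃, _⟩⟩⟩
  · obtain ⟨hp₁, hp₂₃⟩ := Finset.mem_product.mp hp
    obtain ⟨hp₂, hp₃⟩ := Finset.mem_product.mp hp₂₃
    exact lamOfTriple_mem_coverTuples h₁₂ h₁₃ h₂₃ hp₁ hp₂ hp₃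
  · rw [lamOfTriple_fst, lamOfTriple_snd _ h₁₂, lamOfTriple_trd h₁₃ h₂₃]

end CoverTuples

@[to_additive]
theorem prod_coe_insert {ι N : Type*} [DecidableEq ι] [CommMonoid N] {a : ι} {s : Finset ι}
    (ha : a ∉ s) (f : ↥(insert a s) → N) :
    ∏ i, f i = f ⟨a, Finset.mem_insert_self a s⟩ *
      ∏ i : s, f ⟨i, Finset.mem_insert_of_mem i.2⟩ := by
  rw [Finset.univ_eq_attach, Finset.attach_insert, Finset.prod_insert, Finset.prod_image]
  · rfl
  · exact fun i _ j _ h => Subtype.ext (by simpa using h)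
  · simpa using ha

@[to_additive]
theorem prod_coe_pair {ι N : Type*} [DecidableEq ι] [CommMonoid N] {a b : ι} (hab : a ≠ b)
    (f : ({a, b} : Finset ι) → N) : ∏ i, f i = f ⟨a, by simp⟩ * f ⟨b, by simp⟩ := by
  rw [prod_coe_insert (by simpa using hab), Fintype.prod_unique]
  rfl

theorem prod_coe_triple {ι N : Type*} [DecidableEq ι] [CommMonoid N] {a b c : ι} (hab : a ≠ b)
    (hac : a ≠ c) (hbc : b ≠ c) (f : ({a, b, c} : Finset ι) → N) :
    ∏ i, f i = f ⟨a, by simp⟩ * (f ⟨b, by simp⟩ * f ⟨c, by simp⟩) := by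
  rw [prod_coe_insert (by simp [hab, hac]), prod_coe_pair hbc]

end Reindexing

section DegreeThree

open GradedAlgebra (proj)

variable (𝒜 : ℕ → Submodule ℝ A) [GradedAlgebra 𝒜] {D : Fin n → A}

theorem proj_parTerm (α : ∀ i, Sig i × Sig i → ℝ) (I : Finset (Fin n))
    (h : ((i : I) → Sig i.1 × Sig i.1) → A) (k : ℕ) :
    proj 𝒜 k (parTerm D α I h) = (-1 : ℝ) ^ I.card • ∑ lam ∈ coverTuples Sig I, proj 𝒜 k (h lam *
      parFactor (∑ i, D i) (fun i : I => 1 + α i.1 (lam i)) (fun i : I => D i.1)) := by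
  have hsign (y : A) : (-1) ^ I.card * y = (-1 : ℝ) ^ I.card • y := by
    rw [Algebra.smul_def]
    simp
  rw [parTerm, hsign, map_smul, map_sum]

theorem proj_parTerm_eq_zero_of_lt (α : ∀ i, Sig i × Sig i → ℝ) {I : Finset (Fin n)} {k q : ℕ}
    {h : ((i : I) → Sig i.1 × Sig i.1) → A}
    (hlow : ∀ lam ∈ coverTuples Sig I, ∀ m < q, proj 𝒜 m (h lam) = 0) (hk : k < q) :
    proj 𝒜 k (parTerm D α I h) = 0 := by
  rw [proj_parTerm, Finset.sum_eq_zero, smul_zero]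
  exact fun lam hlam => proj_mul_eq_zero_of_lt 𝒜 (hlow lam hlam) hk _

variable (hD : ∀ i, IsNilpotent (D i)) (hD1 : ∀ i, D i ∈ 𝒜 1) (α : ∀ i, Sig i × Sig i → ℝ)

include hD hD1

theorem proj_three_parTerm_singleton {i : Fin n}
    {h : ((j : ({i} : Finset (Fin n))) → Sig j.1 × Sig j.1) → A}
    (hlow : ∀ lam ∈ coverTuples Sig {i}, ∀ m < 1, proj 𝒜 m (h lam) = 0) :
    proj 𝒜 3 (parTerm D α {i} h) = -∑ p ∈ coverPairs (Sig i),
      (((1 : ℝ) / 2 * α i p) • (proj 𝒜 1 (h (lamOfSingle i p)) * (∑ j, D j) ^ 2) -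
        ((1 : ℝ) / 2 * (α i p ^ 2 + 2 * α i p)) • (proj 𝒜 2 (h (lamOfSingle i p)) * D i) +
        ((1 : ℝ) / 6 * (α i p ^ 3 + 3 * α i p ^ 2 + 3 * α i p)) •
          (proj 𝒜 1 (h (lamOfSingle i p)) * D i ^ 2) +
        α i p • (proj 𝒜 2 (h (lamOfSingle i p)) * ∑ j, D j) -
        ((1 : ℝ) / 2 * (α i p ^ 2 + 2 * α i p)) •
          (proj 𝒜 1 (h (lamOfSingle i p)) * (D i * ∑ j, D j)) +
        α i p • proj 𝒜 3 (h (lamOfSingle i p))) := by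
  rw [proj_parTerm, sum_coverTuples_singleton, Finset.card_singleton, pow_one, neg_one_smul]
  refine congrArg _ (Finset.sum_congr rfl fun p hp => ?_)
  exact proj_three_mul_parFactor_of_unique 𝒜 (hlow _ (lamOfSingle_mem_coverTuples hp))
    (isNilpotent_sum fun j _ => hD j) (Submodule.sum_mem _ fun j _ => hD1 j) (hD i) (hD1 i) _

theorem proj_three_parTerm_pair {i₁ i₂ : Fin n} (h₁₂ : i₁ ≠ i₂)
    {h : ((j : ({i₁, i₂} : Finset (Fin n))) → Sig j.1 × Sig j.1) → A}
    (hlow : ∀ lam ∈ coverTuples Sig {i₁, i₂}, ∀ m < 2, proj 𝒜 m (h lam) = 0) :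
    proj 𝒜 3 (parTerm D α {i₁, i₂} h) =
      ∑ p₁ ∈ coverPairs (Sig i₁), ∑ p₂ ∈ coverPairs (Sig i₂),
        (-((1 : ℝ) / 2 * (α i₂ p₂ ^ 2 * α i₁ p₁ + 2 * α i₁ p₁ * α i₂ p₂ + α i₁ p₁ +
            α i₂ p₂ ^ 2 + 2 * α i₂ p₂)) • (D i₂ * proj 𝒜 2 (h (lamOfPair i₁ i₂ p₁ p₂))) -
          ((1 : ℝ) / 2 * (α i₁ p₁ ^ 2 * α i₂ p₂ + 2 * α i₁ p₁ * α i₂ p₂ + α i₂ p₂ +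
            α i₁ p₁ ^ 2 + 2 * α i₁ p₁)) • (D i₁ * proj 𝒜 2 (h (lamOfPair i₁ i₂ p₁ p₂))) +
          (α i₁ p₁ * α i₂ p₂ + α i₁ p₁ + α i₂ p₂) •
            ((∑ j, D j) * proj 𝒜 2 (h (lamOfPair i₁ i₂ p₁ p₂))) +
          (α i₁ p₁ * α i₂ p₂ + α i₁ p₁ + α i₂ p₂) •
            proj 𝒜 3 (h (lamOfPair i₁ i₂ p₁ p₂))) := by
  rw [proj_parTerm, sum_coverTuples_pair h₁₂, Finset.card_pair h₁₂, neg_one_sq, one_smul]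
  refine Finset.sum_congr rfl fun p₁ hp₁ => Finset.sum_congr rfl fun p₂ hp₂ => ?_
  rw [proj_succ_mul_parFactor 𝒜 _ (hlow _ (lamOfPair_mem_coverTuples h₁₂ hp₁ hp₂))
    (isNilpotent_sum fun j _ => hD j) (Submodule.sum_mem _ fun j _ => hD1 j)
    (fun j : ({i₁, i₂} : Finset (Fin n)) => hD j) (fun j => hD1 j),
    prod_coe_pair h₁₂, sum_coe_pair h₁₂]
  simp only [lamOfPair_fst, lamOfPair_snd h₁₂, mul_comm (D _), mul_comm (∑ j, D j)]
  module

theorem proj_three_parTerm_triple {i₁ i₂ i₃ : Fin n} (h₁₂ : i₁ ≠ i₂) (h₁₃ : i₁ ≠ i₃)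
    (h₂₃ : i₂ ≠ i₃) {h : ((j : ({i₁, i₂, i₃} : Finset (Fin n))) → Sig j.1 × Sig j.1) → A}
    (hlow : ∀ lam ∈ coverTuples Sig {i₁, i₂, i₃}, ∀ m < 3, proj 𝒜 m (h lam) = 0) :
    proj 𝒜 3 (parTerm D α {i₁, i₂, i₃} h) =
      -∑ p₁ ∈ coverPairs (Sig i₁), ∑ p₂ ∈ coverPairs (Sig i₂), ∑ p₃ ∈ coverPairs (Sig i₃),
        (α i₁ p₁ * α i₂ p₂ * α i₃ p₃ + α i₁ p₁ * α i₂ p₂ + α i₂ p₂ * α i₃ p₃ +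
          α i₁ p₁ * α i₃ p₃ + α i₁ p₁ + α i₂ p₂ + α i₃ p₃) •
            proj 𝒜 3 (h (lamOfTriple i₁ i₂ i₃ p₁ p₂ p₃)) := by
  rw [proj_parTerm, sum_coverTuples_triple h₁₂ h₁₃ h₂₃,
    Finset.card_eq_three.mpr ⟨i₁, i₂, i₃, h₁₂, h₁₃, h₂₃, rfl⟩, Odd.neg_one_pow (by decide),
    neg_one_smul]
  refine congrArg _ (Finset.sum_congr rfl fun p₁ hp₁ => Finset.sum_congr rfl fun p₂ hp₂ =>
    Finset.sum_congr rfl fun p₃ hp₃ => ?_)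
  rw [proj_mul_parFactor 𝒜 _ (hlow _ (lamOfTriple_mem_coverTuples h₁₂ h₁₃ h₂₃ hp₁ hp₂ hp₃))
    (isNilpotent_sum fun j _ => hD j) (Submodule.sum_mem _ fun j _ => hD1 j)
    (fun j : ({i₁, i₂, i₃} : Finset (Fin n)) => hD j) (fun j => hD1 j),
    prod_coe_triple h₁₂ h₁₃ h₂₃]
  simp only [lamOfTriple_fst, lamOfTriple_snd _ h₁₂, lamOfTriple_trd h₁₃ h₂₃]
  congr 1
  ring

theorem chPar_deg3_general {η τ : ∀ i, Sig i} {α : ∀ i, Sig i × Sig i → ℝ}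
    {αp αm : ∀ i, Sig i → ℝ} (hw : ∀ i, IsWeightExtension (η i) (τ i) (α i) (αp i) (αm i)) (c : A)
    (g hh : ∀ I : Finset (Fin n), ((i : I) → Sig i.1 × Sig i.1) → A)
    (hGRR : ∀ I : Finset (Fin n), I.Nonempty → ∀ lam ∈ coverTuples Sig I,
      g I lam = (∏ i : I, Jf 0 1 (D i.1)) * hh I lam)
    (htwist : cSigma c g η * nexp (∑ i, D i) = c)
    (hlow : ∀ I : Finset (Fin n), ∀ lam ∈ coverTuples Sig I, ∀ m < I.card,
      proj 𝒜 m (hh I lam) = 0) :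
    proj 𝒜 3 (chPar D αm αp c g) = proj 𝒜 3 c -
      (∑ i, ∑ p ∈ coverPairs (Sig i), ((1 : ℝ) / 2 * α i p) •
        (proj 𝒜 1 (hh {i} (lamOfSingle i p)) * (∑ j, D j) ^ 2)) +
      (∑ i, ∑ p ∈ coverPairs (Sig i), ((1 : ℝ) / 2 * (α i p ^ 2 + 2 * α i p)) •
        (proj 𝒜 2 (hh {i} (lamOfSingle i p)) * D i)) -
      (∑ i, ∑ p ∈ coverPairs (Sig i),
        ((1 : ℝ) / 6 * (α i p ^ 3 + 3 * α i p ^ 2 + 3 * α i p)) •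
          (proj 𝒜 1 (hh {i} (lamOfSingle i p)) * D i ^ 2)) -
      (∑ i, ∑ p ∈ coverPairs (Sig i), α i p •
        (proj 𝒜 2 (hh {i} (lamOfSingle i p)) * ∑ j, D j)) +
      (∑ i, ∑ p ∈ coverPairs (Sig i), ((1 : ℝ) / 2 * (α i p ^ 2 + 2 * α i p)) •
        (proj 𝒜 1 (hh {i} (lamOfSingle i p)) * D i * ∑ j, D j)) -
      (∑ i, ∑ p ∈ coverPairs (Sig i), α i p • proj 𝒜 3 (hh {i} (lamOfSingle i p))) -
      (∑ i₁, ∑ i₂ ∈ Finset.Ioi i₁,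
        ∑ p₁ ∈ coverPairs (Sig i₁), ∑ p₂ ∈ coverPairs (Sig i₂),
          ((1 : ℝ) / 2 * (α i₂ p₂ ^ 2 * α i₁ p₁ + 2 * α i₁ p₁ * α i₂ p₂ + α i₁ p₁ +
            α i₂ p₂ ^ 2 + 2 * α i₂ p₂)) •
              (D i₂ * proj 𝒜 2 (hh {i₁, i₂} (lamOfPair i₁ i₂ p₁ p₂)))) -
      (∑ i₁, ∑ i₂ ∈ Finset.Ioi i₁,
        ∑ p₁ ∈ coverPairs (Sig i₁), ∑ p₂ ∈ coverPairs (Sig i₂),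
          ((1 : ℝ) / 2 * (α i₁ p₁ ^ 2 * α i₂ p₂ + 2 * α i₁ p₁ * α i₂ p₂ + α i₂ p₂ +
            α i₁ p₁ ^ 2 + 2 * α i₁ p₁)) •
              (D i₁ * proj 𝒜 2 (hh {i₁, i₂} (lamOfPair i₁ i₂ p₁ p₂)))) +
      (∑ i₁, ∑ i₂ ∈ Finset.Ioi i₁,
        ∑ p₁ ∈ coverPairs (Sig i₁), ∑ p₂ ∈ coverPairs (Sig i₂),
          (α i₁ p₁ * α i₂ p₂ + α i₁ p₁ + α i₂ p₂) •
            ((∑ j, D j) * proj 𝒜 2 (hh {i₁, i₂} (lamOfPair i₁ i₂ p₁ p₂)))) +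
      (∑ i₁, ∑ i₂ ∈ Finset.Ioi i₁,
        ∑ p₁ ∈ coverPairs (Sig i₁), ∑ p₂ ∈ coverPairs (Sig i₂),
          (α i₁ p₁ * α i₂ p₂ + α i₁ p₁ + α i₂ p₂) •
            proj 𝒜 3 (hh {i₁, i₂} (lamOfPair i₁ i₂ p₁ p₂))) -
      ∑ i₁, ∑ i₂ ∈ Finset.Ioi i₁,
        ∑ i₃ ∈ Finset.Ioi i₂,
          ∑ p₁ ∈ coverPairs (Sig i₁), ∑ p₂ ∈ coverPairs (Sig i₂), ∑ p₃ ∈ coverPairs (Sig i₃),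
            (α i₁ p₁ * α i₂ p₂ * α i₃ p₃ + α i₁ p₁ * α i₂ p₂ + α i₂ p₂ * α i₃ p₃ +
              α i₁ p₁ * α i₃ p₃ + α i₁ p₁ + α i₂ p₂ + α i₃ p₃) •
                proj 𝒜 3 (hh {i₁, i₂, i₃} (lamOfTriple i₁ i₂ i₃ p₁ p₂ p₃)) := by
  have hsingle (i : Fin n) := proj_three_parTerm_singleton 𝒜 hD hD1 α (hlow {i})
  have hpair (i₁ i₂ : Fin n) (h₁₂ : i₁ < i₂) := proj_three_parTerm_pair 𝒜 hD hD1 α h₁₂.ne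
    fun lam hlam m hm => hlow {i₁, i₂} lam hlam m (hm.trans_eq (Finset.card_pair h₁₂.ne).symm)
  have htriple (i₁ i₂ i₃ : Fin n) (h₁₂ : i₁ < i₂) (h₂₃ : i₂ < i₃) :=
    proj_three_parTerm_triple 𝒜 hD hD1 α h₁₂.ne (h₁₂.trans h₂₃).ne h₂₃.ne
      fun lam hlam m hm => hlow {i₁, i₂, i₃} lam hlam m (hm.trans_eq (Finset.card_eq_three.mpr
        ⟨i₁, i₂, i₃, h₁₂.ne, (h₁₂.trans h₂₃).ne, h₂₃.ne, rfl⟩).symm)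
  rw [chPar_eq hD hw c g hh hGRR htwist, map_add, map_sum, sum_nonempty_eq_of_three_lt_card
    fun I hI => proj_parTerm_eq_zero_of_lt 𝒜 α (hlow I) hI]
  rw [Finset.sum_congr rfl fun i _ => hsingle i,
    Finset.sum_congr rfl fun i₁ _ => Finset.sum_congr rfl fun i₂ h₁₂ =>
      hpair i₁ i₂ (Finset.mem_Ioi.mp h₁₂),
    Finset.sum_congr rfl fun i₁ _ => Finset.sum_congr rfl fun i₂ h₁₂ =>
      Finset.sum_congr rfl fun i₃ h₂₃ => htriple i₁ i₂ i₃
        (Finset.mem_Ioi.mp h₁₂) (Finset.mem_Ioi.mp h₂₃)]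
  simp only [Finset.sum_add_distrib, Finset.sum_sub_distrib, Finset.sum_neg_distrib, neg_smul,
    mul_assoc]
  abel

end DegreeThree

/-- Degree `3` part of the parabolic Chern character: the paper's explicit formula for
`ch_3^{Par}(E)` in terms of the weights `α`, the ranks `r` of the graded pieces, the
classes `γ_{i,λ} = ξ_{i*}(c_1(Gr^i_λ))`, `δ_{i,λ} = ξ_{i*}(½(c_1² - 2c_2)(Gr^i_λ))`,
`γ_{(i₁,i₂),(λ₁,λ₂)} = ξ_{i₁i₂*}(c_1(Gr^{i₁,i₂}))` (encoded as the degree `2`, `3`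
components of `h_{I,λ}`), and the cycle classes `[D_p]` of the components of the double
and triple intersections. -/
theorem chPar_deg3
    {A : Type*} [CommRing A] [Algebra ℝ A]
    {n : ℕ} (hn : 1 ≤ n)
    {Sig : Fin n → Type*} [∀ i, Fintype (Sig i)] [∀ i, LinearOrder (Sig i)]
    [∀ i, Nontrivial (Sig i)]
    (D : Fin n → A) (hD : ∀ i, IsNilpotent (D i))
    (η τ : ∀ i, Sig i) (hη : ∀ i σ, η i ≤ σ) (hτ : ∀ i σ, σ ≤ τ i)
    (α : ∀ i, Sig i × Sig i → ℝ)
    (hα : ∀ i p, p.1 ⋖ p.2 → α i p ∈ Set.Ioc (-1 : ℝ) 0)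
    (hαmono : ∀ i (p p' : Sig i × Sig i),
        p.1 ⋖ p.2 → p'.1 ⋖ p'.2 → p.1 ≤ p'.1 → α i p ≤ α i p')
    (αp αm : ∀ i, Sig i → ℝ)
    (hαpτ : ∀ i, αp i (τ i) = 0)
    (hαpc : ∀ i (σ σ' : Sig i), σ ⋖ σ' → αp i σ = α i (σ, σ'))
    (hαmη : ∀ i, αm i (η i) = -1)
    (hαmc : ∀ i (σ σ' : Sig i), σ ⋖ σ' → αm i σ' = α i (σ, σ'))
    (c : A)
    (g hh : ∀ I : Finset (Fin n), ((i : I) → Sig i.1 × Sig i.1) → A)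
    (hGRR : ∀ (I : Finset (Fin n)), I.Nonempty →
        ∀ lam : (i : I) → Sig i.1 × Sig i.1, (∀ i : I, (lam i).1 ⋖ (lam i).2) →
          g I lam = (∏ i : I, Jf 0 1 (D i.1)) * hh I lam)
    (htwist : cSigma c g (fun i => η i) * nexp (∑ i, D i) = c)
    (𝒜 : ℕ → Submodule ℝ A) [GradedAlgebra 𝒜]
    (hD1 : ∀ i, D i ∈ 𝒜 1)
    (hhlow : ∀ (I : Finset (Fin n)) (lam : (i : I) → Sig i.1 × Sig i.1),
        (∀ i : I, (lam i).1 ⋖ (lam i).2) → ∀ m, m < I.card →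
          (DirectSum.decompose 𝒜 (hh I lam) m : A) = 0)
    (r : ∀ i, Sig i × Sig i → ℚ)
    (hr0 : ∀ i (p : Sig i × Sig i), p.1 ⋖ p.2 → 0 ≤ r i p)
    (hr1 : ∀ i (p : Sig i × Sig i), p.1 ⋖ p.2 →
        (DirectSum.decompose 𝒜 (hh {i} (lamOfSingle i p)) 1 : A) = (r i p : ℝ) • D i)
    (P : Fin n → Fin n → Type) [∀ i j, Fintype (P i j)]
    (Dp : ∀ i₁ i₂, P i₁ i₂ → A)
    (hDp2 : ∀ i₁ i₂, i₁ < i₂ → ∀ p, Dp i₁ i₂ p ∈ 𝒜 2)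
    (hDprod : ∀ i₁ i₂, i₁ < i₂ → D i₁ * D i₂ = ∑ p : P i₁ i₂, Dp i₁ i₂ p)
    (rp : ∀ i₁ i₂, (Sig i₁ × Sig i₁) → (Sig i₂ × Sig i₂) → P i₁ i₂ → ℚ)
    (hrp0 : ∀ i₁ i₂, i₁ < i₂ → ∀ (p₁ : Sig i₁ × Sig i₁) (p₂ : Sig i₂ × Sig i₂)
        (p : P i₁ i₂), p₁.1 ⋖ p₁.2 → p₂.1 ⋖ p₂.2 → 0 ≤ rp i₁ i₂ p₁ p₂ p)
    (hrp2 : ∀ i₁ i₂, i₁ < i₂ → ∀ (p₁ : Sig i₁ × Sig i₁) (p₂ : Sig i₂ × Sig i₂),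
        p₁.1 ⋖ p₁.2 → p₂.1 ⋖ p₂.2 →
          (DirectSum.decompose 𝒜 (hh {i₁, i₂} (lamOfPair i₁ i₂ p₁ p₂)) 2 : A) =
            ∑ p : P i₁ i₂, (rp i₁ i₂ p₁ p₂ p : ℝ) • Dp i₁ i₂ p)
    (P3 : Fin n → Fin n → Fin n → Type) [∀ i j l, Fintype (P3 i j l)]
    (Dp3 : ∀ i₁ i₂ i₃, P3 i₁ i₂ i₃ → A)
    (hDp3 : ∀ i₁ i₂ i₃, i₁ < i₂ → i₂ < i₃ → ∀ p, Dp3 i₁ i₂ i₃ p ∈ 𝒜 3)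
    (hDprod3 : ∀ i₁ i₂ i₃, i₁ < i₂ → i₂ < i₃ →
        D i₁ * D i₂ * D i₃ = ∑ p : P3 i₁ i₂ i₃, Dp3 i₁ i₂ i₃ p)
    (r3 : ∀ i₁ i₂ i₃, (Sig i₁ × Sig i₁) → (Sig i₂ × Sig i₂) → (Sig i₃ × Sig i₃) →
        P3 i₁ i₂ i₃ → ℚ)
    (hr30 : ∀ i₁ i₂ i₃, i₁ < i₂ → i₂ < i₃ →
        ∀ (p₁ : Sig i₁ × Sig i₁) (p₂ : Sig i₂ × Sig i₂) (p₃ : Sig i₃ × Sig i₃)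
          (p : P3 i₁ i₂ i₃), p₁.1 ⋖ p₁.2 → p₂.1 ⋖ p₂.2 → p₃.1 ⋖ p₃.2 →
            0 ≤ r3 i₁ i₂ i₃ p₁ p₂ p₃ p)
    (hr3 : ∀ i₁ i₂ i₃, i₁ < i₂ → i₂ < i₃ →
        ∀ (p₁ : Sig i₁ × Sig i₁) (p₂ : Sig i₂ × Sig i₂) (p₃ : Sig i₃ × Sig i₃),
          p₁.1 ⋖ p₁.2 → p₂.1 ⋖ p₂.2 → p₃.1 ⋖ p₃.2 →
            (DirectSum.decompose 𝒜 (hh {i₁, i₂, i₃}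
                (lamOfTriple i₁ i₂ i₃ p₁ p₂ p₃)) 3 : A) =
              ∑ p : P3 i₁ i₂ i₃, (r3 i₁ i₂ i₃ p₁ p₂ p₃ p : ℝ) • Dp3 i₁ i₂ i₃ p) :
    (DirectSum.decompose 𝒜 (chPar D αm αp c g) 3 : A) =
      (DirectSum.decompose 𝒜 c 3 : A) -
        (∑ i, ∑ p ∈ Finset.univ.filter (fun p : Sig i × Sig i => p.1 ⋖ p.2),
          ((1 : ℝ) / 2 * α i p * (r i p : ℝ)) • (D i * (∑ i', D i') ^ 2)) +
        (∑ i, ∑ p ∈ Finset.univ.filter (fun p : Sig i × Sig i => p.1 ⋖ p.2),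
          ((1 : ℝ) / 2 * (α i p ^ 2 + 2 * α i p)) •
            ((DirectSum.decompose 𝒜 (hh {i} (lamOfSingle i p)) 2 : A) * D i)) -
        (∑ i, ∑ p ∈ Finset.univ.filter (fun p : Sig i × Sig i => p.1 ⋖ p.2),
          ((1 : ℝ) / 6 * (α i p ^ 3 + 3 * α i p ^ 2 + 3 * α i p) * (r i p : ℝ)) •
            (D i ^ 3)) -
        (∑ i, ∑ p ∈ Finset.univ.filter (fun p : Sig i × Sig i => p.1 ⋖ p.2),
          α i p •
            ((DirectSum.decompose 𝒜 (hh {i} (lamOfSingle i p)) 2 : A) * ∑ i', D i')) +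
        (∑ i, ∑ p ∈ Finset.univ.filter (fun p : Sig i × Sig i => p.1 ⋖ p.2),
          ((1 : ℝ) / 2 * (α i p ^ 2 + 2 * α i p) * (r i p : ℝ)) •
            (D i ^ 2 * ∑ i', D i')) -
        (∑ i, ∑ p ∈ Finset.univ.filter (fun p : Sig i × Sig i => p.1 ⋖ p.2),
          α i p • (DirectSum.decompose 𝒜 (hh {i} (lamOfSingle i p)) 3 : A)) -
        (∑ i₁, ∑ i₂ ∈ Finset.univ.filter (fun i₂ => i₁ < i₂),
          ∑ p₁ ∈ Finset.univ.filter (fun p₁ : Sig i₁ × Sig i₁ => p₁.1 ⋖ p₁.2),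
            ∑ p₂ ∈ Finset.univ.filter (fun p₂ : Sig i₂ × Sig i₂ => p₂.1 ⋖ p₂.2),
              ∑ p : P i₁ i₂,
                ((1 : ℝ) / 2 *
                    (α i₂ p₂ ^ 2 * α i₁ p₁ + 2 * α i₁ p₁ * α i₂ p₂ + α i₁ p₁ +
                      α i₂ p₂ ^ 2 + 2 * α i₂ p₂) * (rp i₁ i₂ p₁ p₂ p : ℝ)) •
                  (D i₂ * Dp i₁ i₂ p)) -
        (∑ i₁, ∑ i₂ ∈ Finset.univ.filter (fun i₂ => i₁ < i₂),
          ∑ p₁ ∈ Finset.univ.filter (fun p₁ : Sig i₁ × Sig i₁ => p₁.1 ⋖ p₁.2),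
            ∑ p₂ ∈ Finset.univ.filter (fun p₂ : Sig i₂ × Sig i₂ => p₂.1 ⋖ p₂.2),
              ∑ p : P i₁ i₂,
                ((1 : ℝ) / 2 *
                    (α i₁ p₁ ^ 2 * α i₂ p₂ + 2 * α i₁ p₁ * α i₂ p₂ + α i₂ p₂ +
                      α i₁ p₁ ^ 2 + 2 * α i₁ p₁) * (rp i₁ i₂ p₁ p₂ p : ℝ)) •
                  (D i₁ * Dp i₁ i₂ p)) +
        (∑ i₁, ∑ i₂ ∈ Finset.univ.filter (fun i₂ => i₁ < i₂),
          ∑ p₁ ∈ Finset.univ.filter (fun p₁ : Sig i₁ × Sig i₁ => p₁.1 ⋖ p₁.2),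
            ∑ p₂ ∈ Finset.univ.filter (fun p₂ : Sig i₂ × Sig i₂ => p₂.1 ⋖ p₂.2),
              ∑ p : P i₁ i₂,
                ((α i₁ p₁ * α i₂ p₂ + α i₁ p₁ + α i₂ p₂) * (rp i₁ i₂ p₁ p₂ p : ℝ)) •
                  ((∑ i', D i') * Dp i₁ i₂ p)) +
        (∑ i₁, ∑ i₂ ∈ Finset.univ.filter (fun i₂ => i₁ < i₂),
          ∑ p₁ ∈ Finset.univ.filter (fun p₁ : Sig i₁ × Sig i₁ => p₁.1 ⋖ p₁.2),
            ∑ p₂ ∈ Finset.univ.filter (fun p₂ : Sig i₂ × Sig i₂ => p₂.1 ⋖ p₂.2),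
              (α i₁ p₁ * α i₂ p₂ + α i₁ p₁ + α i₂ p₂) •
                (DirectSum.decompose 𝒜 (hh {i₁, i₂} (lamOfPair i₁ i₂ p₁ p₂)) 3 : A)) -
        ∑ i₁, ∑ i₂ ∈ Finset.univ.filter (fun i₂ => i₁ < i₂),
          ∑ i₃ ∈ Finset.univ.filter (fun i₃ => i₂ < i₃),
            ∑ p₁ ∈ Finset.univ.filter (fun p₁ : Sig i₁ × Sig i₁ => p₁.1 ⋖ p₁.2),
              ∑ p₂ ∈ Finset.univ.filter (fun p₂ : Sig i₂ × Sig i₂ => p₂.1 ⋖ p₂.2),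
                ∑ p₃ ∈ Finset.univ.filter (fun p₃ : Sig i₃ × Sig i₃ => p₃.1 ⋖ p₃.2),
                  ∑ p : P3 i₁ i₂ i₃,
                    ((α i₁ p₁ * α i₂ p₂ * α i₃ p₃ + α i₁ p₁ * α i₂ p₂ +
                        α i₂ p₂ * α i₃ p₃ + α i₁ p₁ * α i₃ p₃ + α i₁ p₁ + α i₂ p₂ +
                        α i₃ p₃) * (r3 i₁ i₂ i₃ p₁ p₂ p₃ p : ℝ)) •
                      Dp3 i₁ i₂ i₃ p := by
  simp only [← mem_coverPairs, ← Finset.mem_Ioi] at hr1 hrp2 hr3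
  have hgen := chPar_deg3_general 𝒜 hD hD1
    (fun i => ⟨hη i, hτ i, hαpτ i, hαpc i, hαmη i, hαmc i⟩) c g hh
    (fun I hI lam hlam => hGRR I hI lam (mem_coverTuples.mp hlam)) htwist
    fun I lam hlam => hhlow I lam (mem_coverTuples.mp hlam)
  simp +contextual only [GradedAlgebra.proj_apply, hr1, hrp2, hr3] at hgen
  rw [hgen]
  simp only [Finset.filter_lt_eq_Ioi, Finset.mul_sum, Finset.smul_sum, smul_smul,
    smul_mul_assoc, mul_smul_comm, ← sq, ← pow_succ']
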